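/- arXiv:1902.03178 — 8 statements merged into one kernel-verified Lean document; each statement's English description precedes it below -/
import Mathlib

section
/- Let G be a simple graph on a finite vertex set V, let A ⊆ V and u ∈ V. Then Odd_{G⋆u}(A) = Odd_G(A) Δ (N_G(u) ∩ A) if u ∉ Odd_G(A), and Odd_{G⋆u}(A) = Odd_G(A) Δ (N_G(u) ∖ A) if u ∈ Odd_G(A). -/
open Finset symmDiff

variable {V : Type*}

/-- The neighbourhood of a vertex as a `Finset`. -/
def nbhd [Fintype V] [DecidableEq V] (G : SimpleGraph V) [DecidableRel G.Adj] (v : V) :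
    Finset V :=
  Finset.univ.filter (G.Adj v)

/-- The odd neighbourhood of a set of vertices: all vertices with an odd number of
neighbours in `A`. -/
def oddNbhd [Fintype V] [DecidableEq V] (G : SimpleGraph V) [DecidableRel G.Adj]
    (A : Finset V) : Finset V :=
  Finset.univ.filter fun w => Odd (A.filter (G.Adj w)).card

/-- Local complementation of `G` at the vertex `u`. -/
def localComp (G : SimpleGraph V) (u : V) : SimpleGraph V where
  Adj v w := v ≠ w ∧ Xor' (G.Adj v w) (G.Adj u v ∧ G.Adj u w)
  symm := by
    constructor
    rintro v w ⟨h1, h2⟩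
    exact ⟨h1.symm, by rwa [G.adj_comm v w, and_comm] at h2⟩
  loopless := by constructor; rintro v ⟨h, -⟩; exact h rfl

instance {a b : Prop} [Decidable a] [Decidable b] : Decidable (Xor' a b) :=
  inferInstanceAs (Decidable ((a ∧ ¬b) ∨ (b ∧ ¬a)))

instance [DecidableEq V] (G : SimpleGraph V) [DecidableRel G.Adj] (u : V) :
    DecidableRel (localComp G u).Adj :=
  fun v w => inferInstanceAs (Decidable (v ≠ w ∧ Xor' (G.Adj v w) (G.Adj u v ∧ G.Adj u w)))

/-- The pivot of `G` along the edge `uv`. -/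
def pivot (G : SimpleGraph V) (u v : V) : SimpleGraph V :=
  localComp (localComp (localComp G u) v) u

theorem localComp_card_aux [Fintype V] [DecidableEq V] (G : SimpleGraph V) [DecidableRel G.Adj]
    (A : Finset V) (u w : V) :
    ((A.filter ((localComp G u).Adj w)).card : ZMod 2) =
      (A.filter (G.Adj w)).card +
        if G.Adj u w then ((A.filter (G.Adj u)).card + if w ∈ A then 1 else 0 : ZMod 2) else 0 := by
  have two : (1 + 1 : ZMod 2) = 0 := by decide
  have hw : (if w ∈ A then 1 else 0 : ZMod 2) = ∑ x ∈ A, if w = x then 1 else 0 := by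
    rw [Finset.sum_ite_eq]
  rw [hw]
  simp only [Finset.natCast_card_filter]
  by_cases h : G.Adj u w
  · simp only [h, if_true, ← Finset.sum_add_distrib]
    refine Finset.sum_congr rfl fun x _ => ?_
    by_cases e : w = x
    · subst e
      simp [h, localComp, two]
    · by_cases h1 : G.Adj w x <;> by_cases h2 : G.Adj u x <;>
        simp [localComp, Xor', h, h1, h2, e, two]
  · simp only [h, if_false, add_zero]
    refine Finset.sum_congr rfl fun x _ => ?_
    by_cases h1 : G.Adj w x
    · simp [localComp, Xor', h, h1, h1.ne]
    · simp [localComp, Xor', h, h1]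

theorem oddNbhd_localComp [Fintype V] [DecidableEq V] (G : SimpleGraph V) [DecidableRel G.Adj]
    (A : Finset V) (u : V) :
    (u ∉ oddNbhd G A →
      oddNbhd (localComp G u) A = oddNbhd G A ∆ (nbhd G u ∩ A)) ∧
    (u ∈ oddNbhd G A →
      oddNbhd (localComp G u) A = oddNbhd G A ∆ (nbhd G u \ A)) := by
  have key := localComp_card_aux G A u
  have hz : ∀ n : ℕ, Odd n ↔ (n : ZMod 2) = 1 := fun n => (ZMod.natCast_eq_one_iff_odd).symm
  have z2 : ∀ a : ZMod 2, a = 0 ∨ a = 1 := by decide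
  have two : (1 + 1 : ZMod 2) = 0 := by decide
  constructor <;> intro hu <;> ext w <;>
    simp only [oddNbhd, nbhd, Finset.mem_symmDiff, Finset.mem_filter, Finset.mem_univ, true_and,
      Finset.mem_inter, Finset.mem_sdiff, hz, key w] at hu ⊢ <;>
    rcases z2 ((A.filter (G.Adj w)).card : ZMod 2) with a | a <;>
    rcases z2 ((A.filter (G.Adj u)).card : ZMod 2) with b | b <;>
    by_cases h : G.Adj u w <;> by_cases hA : w ∈ A <;>
    simp_all
end

section
/- Let (G,I,O) be an open graph that admits a focused gFlow, and let u, v be adjacent vertices of G with u,v ∉ I ∪ O. Then the open graph (G', I, O), where G' := (G∧uv) ∖ {u,v} is obtained from the pivot of G along the edge uv by deleting the vertices u and v, also admits a focused gFlow. -/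
open Finset symmDiff

variable {V : Type*}

instance [DecidableEq V] (G : SimpleGraph V) [DecidableRel G.Adj] (u v : V) :
    DecidableRel (pivot G u v).Adj :=
  inferInstanceAs (DecidableRel (localComp (localComp (localComp G u) v) u).Adj)

instance {α β : Type*} (G : SimpleGraph β) [DecidableRel G.Adj] (f : α → β) :
    DecidableRel (G.comap f).Adj :=
  fun a b => inferInstanceAs (Decidable (G.Adj (f a) (f b)))

/-- `(g, r)` is a focused gFlow on the open graph `(G, I, O)`: `r` is a strict partial
order, each correction set `g u` (for `u ∉ O`) avoids the inputs, its odd neighbourhood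
meets the non-outputs exactly in `{u}`, and `g u` lies strictly in the future of `u`. -/
def IsFocusedGFlow [Fintype V] [DecidableEq V] (G : SimpleGraph V) [DecidableRel G.Adj]
    (I O : Finset V) (g : V → Finset V) (r : V → V → Prop) : Prop :=
  (∀ a, ¬ r a a) ∧ (∀ a b c, r a b → r b c → r a c) ∧
    ∀ u ∉ O, g u ∩ I = ∅ ∧ oddNbhd G (g u) \ O = {u} ∧ ∀ v ∈ g u, r u v

/-- The open graph `(G, I, O)` admits a focused gFlow. -/
def HasFocusedGFlow [Fintype V] [DecidableEq V] (G : SimpleGraph V) [DecidableRel G.Adj]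
    (I O : Finset V) : Prop :=
  ∃ g r, IsFocusedGFlow G I O g r

/-- Adjacency indicator over `ZMod 2`. -/
def adjZ (G : SimpleGraph V) [DecidableRel G.Adj] (x y : V) : ZMod 2 :=
  if G.Adj x y then 1 else 0

theorem mem_oddNbhd_iff_sum [Fintype V] [DecidableEq V] (G : SimpleGraph V)
    [DecidableRel G.Adj] (A : Finset V) (x : V) :
    x ∈ oddNbhd G A ↔ ∑ y ∈ A, adjZ G x y = 1 := by
  unfold oddNbhd adjZ
  rw [Finset.sum_boole, ZMod.natCast_eq_one_iff_odd]
  simp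

theorem adjZ_pivot [DecidableEq V] (G : SimpleGraph V) [DecidableRel G.Adj] (u v x y : V)
    (huv : G.Adj u v) (hxu : x ≠ u) (hxv : x ≠ v) (hyu : y ≠ u) (hyv : y ≠ v) :
    adjZ (pivot G u v) x y
      = adjZ G x y + adjZ G x u * adjZ G v y + adjZ G x v * adjZ G u y := by
  have e2 : (1 : ZMod 2) + 1 = 0 := by decide
  have huv' := huv.ne
  have c1 := G.adj_comm x u
  have c2 := G.adj_comm x v
  have c3 := huv.symm
  unfold adjZ pivot localComp
  simp only [Xor']
  by_cases hxy : x = y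
  · subst hxy
    by_cases h1 : G.Adj u x <;> by_cases h2 : G.Adj v x <;> simp_all
  · by_cases h1 : G.Adj u x <;> by_cases h2 : G.Adj v x <;> by_cases h3 : G.Adj u y <;>
      by_cases h4 : G.Adj v y <;> by_cases h5 : G.Adj x y <;>
      simp [*, hxu.symm, hxv.symm, hyu.symm, hyv.symm, huv'.symm, Ne.symm]

theorem zmod2_ne_one (a : ZMod 2) (h : a ≠ 1) : a = 0 := by
  revert a; decide

theorem hasFocusedGFlow_pivot_delete [Fintype V] [DecidableEq V]
    (G : SimpleGraph V) [DecidableRel G.Adj] (I O : Finset V)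
    (h : HasFocusedGFlow G I O) (u v : V) (huv : G.Adj u v)
    (hu : u ∉ I ∪ O) (hv : v ∉ I ∪ O) :
    HasFocusedGFlow
      ((pivot G u v).comap (Subtype.val : {x : V // x ≠ u ∧ x ≠ v} → V))
      (I.subtype (fun x => x ≠ u ∧ x ≠ v)) (O.subtype (fun x => x ≠ u ∧ x ≠ v)) := by
  obtain ⟨g, r, hirr, htr, hg⟩ := h
  have huO : u ∉ O := fun h => hu (Finset.mem_union_right _ h)
  have hvO : v ∉ O := fun h => hv (Finset.mem_union_right _ h)
  refine ⟨fun w => (g w).subtype (fun x => x ≠ u ∧ x ≠ v), fun a b => r a b,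
    fun a => hirr a, fun a b c => htr a b c, ?_⟩
  rintro ⟨w, hwu, hwv⟩ hw
  have hwO : w ∉ O := by simpa using hw
  obtain ⟨h1, h2, h3⟩ := hg w hwO
  have key : ∀ x, x ∉ O → (∑ y ∈ g w, adjZ G x y = 1 ↔ x = w) := by
    intro x hx
    rw [← mem_oddNbhd_iff_sum]
    have := Finset.ext_iff.mp h2 x
    simpa [hx] using this
  have su : ∑ y ∈ g w, adjZ G u y = 0 :=
    zmod2_ne_one _ fun h => hwu ((key u huO).mp h).symm
  have sv : ∑ y ∈ g w, adjZ G v y = 0 :=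
    zmod2_ne_one _ fun h => hwv ((key v hvO).mp h).symm
  refine ⟨?_, ?_, ?_⟩
  · ext ⟨y, hy⟩
    have := Finset.ext_iff.mp h1 y
    simpa using this
  · ext ⟨x, hxu, hxv⟩
    have hsum : ∑ y ∈ (g w).subtype (fun x => x ≠ u ∧ x ≠ v),
        adjZ ((pivot G u v).comap (Subtype.val : {x : V // x ≠ u ∧ x ≠ v} → V))
          ⟨x, hxu, hxv⟩ y = ∑ y ∈ g w, adjZ G x y := by
      have e1 : ∀ y ∈ (g w).subtype (fun x => x ≠ u ∧ x ≠ v),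
          adjZ ((pivot G u v).comap (Subtype.val : {x : V // x ≠ u ∧ x ≠ v} → V))
            ⟨x, hxu, hxv⟩ y
          = (fun y : V => adjZ G x y + adjZ G x u * adjZ G v y + adjZ G x v * adjZ G u y) y := by
        intro y _
        have := adjZ_pivot G u v x y huv hxu hxv y.2.1 y.2.2
        exact this
      rw [Finset.sum_congr rfl e1,
        Finset.sum_subtype_eq_sum_filter (s := g w) (p := fun x => x ≠ u ∧ x ≠ v)
        (fun y : V => adjZ G x y + adjZ G x u * adjZ G v y + adjZ G x v * adjZ G u y),
        Finset.sum_filter_of_ne, Finset.sum_add_distrib, Finset.sum_add_distrib,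
        ← Finset.mul_sum, ← Finset.mul_sum, su, sv]
      · simp
      · intro y _ hne
        have e : ∀ a : ZMod 2, a + a = 0 := by decide
        constructor
        · rintro rfl
          apply hne
          have : adjZ G v y = 1 := if_pos huv.symm
          have h0 : adjZ G y y = 0 := if_neg (G.irrefl)
          rw [this, h0]; simp [e]
        · rintro rfl
          apply hne
          have : adjZ G u y = 1 := if_pos huv
          have h0 : adjZ G y y = 0 := if_neg (G.irrefl)
          rw [this, h0]; simp [e]
    rw [Finset.mem_sdiff, mem_oddNbhd_iff_sum, hsum]
    simp only [Finset.mem_subtype, Finset.mem_singleton, Subtype.mk.injEq]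
    constructor
    · rintro ⟨a, b⟩
      exact (key x b).mp a
    · rintro rfl
      exact ⟨(key x hwO).mpr rfl, hwO⟩
  · rintro ⟨y, hy⟩ hyg
    exact h3 y (by simpa using hyg)
end

section
/- Let G be a simple graph on a finite vertex set V and let u, v be adjacent vertices of G. Set A := N_G(u) ∖ (N_G(v) ∪ {v}), B := N_G(v) ∖ (N_G(u) ∪ {u}), and C := N_G(u) ∩ N_G(v). Then the pivot G∧uv satisfies: (1) for distinct x,y ∉ {u,v}, x and y are adjacent in G∧uv iff exactly one of the following holds: x,y are adjacent in G; or x and y lie in two distinct sets among A, B, C; (2) for x ∉ {u,v}, x is adjacent to u in G∧uv iff x is adjacent to v in G, and x is adjacent to v in G∧uv iff x is adjacent to u in G; (3) u and v are adjacent in G∧uv. -/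
open Finset symmDiff

variable {V : Type*}

theorem pivot_adj [Fintype V] [DecidableEq V] (G : SimpleGraph V) [DecidableRel G.Adj]
    (u v : V) (huv : G.Adj u v) (A B C : Finset V)
    (hA : A = nbhd G u \ (nbhd G v ∪ {v}))
    (hB : B = nbhd G v \ (nbhd G u ∪ {u}))
    (hC : C = nbhd G u ∩ nbhd G v) :
    (∀ x y, x ≠ y → x ≠ u → x ≠ v → y ≠ u → y ≠ v →
      ((pivot G u v).Adj x y ↔
        Xor' (G.Adj x y)
          ((x ∈ A ∧ y ∈ B) ∨ (x ∈ B ∧ y ∈ A) ∨ (x ∈ A ∧ y ∈ C) ∨ (x ∈ C ∧ y ∈ A) ∨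
            (x ∈ B ∧ y ∈ C) ∨ (x ∈ C ∧ y ∈ B)))) ∧
    (∀ x, x ≠ u → x ≠ v →
      (((pivot G u v).Adj x u ↔ G.Adj x v) ∧ ((pivot G u v).Adj x v ↔ G.Adj x u))) ∧
    (pivot G u v).Adj u v := by
  have hvu := huv.symm
  have hne := huv.ne
  have hne' := huv.ne'
  have key : ∀ (H : SimpleGraph V) (w x y : V), (localComp H w).Adj x y ↔
      (x ≠ y ∧ Xor' (H.Adj x y) (H.Adj w x ∧ H.Adj w y)) := fun _ _ _ _ => Iff.rfl
  refine ⟨?_, ?_, ?_⟩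
  · intro x y hxy hxu hxv hyu hyv
    subst hA hB hC
    simp only [pivot, key, nbhd, Finset.mem_sdiff, Finset.mem_union, Finset.mem_inter,
      Finset.mem_filter, Finset.mem_univ, Finset.mem_singleton, true_and, ne_eq, hxy, hxu, hxv,
      hyu, hyv, hxu.symm, hxv.symm, hyu.symm, hyv.symm, hne, hne', huv, hvu, SimpleGraph.irrefl,
      not_false_eq_true, or_false, Xor']
    by_cases h1 : G.Adj u x <;> by_cases h2 : G.Adj v x <;> by_cases h3 : G.Adj u y <;>
      by_cases h4 : G.Adj v y <;> by_cases h5 : G.Adj x y <;> simp [h1, h2, h3, h4, h5]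
  · intro x hxu hxv
    rw [(pivot G u v).adj_comm x u, (pivot G u v).adj_comm x v, G.adj_comm x u, G.adj_comm x v]
    simp only [pivot, key, ne_eq, hxu, hxv, hxu.symm, hxv.symm, hne, hne', huv, hvu,
      SimpleGraph.irrefl, not_false_eq_true, Xor']
    by_cases h1 : G.Adj u x <;> by_cases h2 : G.Adj v x <;> simp [h1, h2]
  · simp [pivot, key, hne, hne', huv, hvu, Xor']
end

section
/- Let G be a simple graph on a finite vertex set V, let A ⊆ V, let u ∈ V and v ∈ N_G(u). Then: Odd_{G∧uv}(A) = Odd_G(A) if u,v ∉ cOdd_G(A); Odd_{G∧uv}(A) = Odd_G(A) Δ N_G[v] if u ∈ cOdd_G(A) and v ∉ cOdd_G(A); Odd_{G∧uv}(A) = Odd_G(A) Δ N_G[u] if u ∉ cOdd_G(A) and v ∈ cOdd_G(A); and Odd_{G∧uv}(A) = Odd_G(A) Δ N_G[u] Δ N_G[v] if u,v ∈ cOdd_G(A). -/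
open Finset symmDiff

variable {V : Type*}

/-- The closed neighbourhood of a vertex. -/
def clNbhd [Fintype V] [DecidableEq V] (G : SimpleGraph V) [DecidableRel G.Adj] (v : V) :
    Finset V :=
  insert v (nbhd G v)

/-- The closed odd neighbourhood of a set of vertices. -/
def cOddNbhd [Fintype V] [DecidableEq V] (G : SimpleGraph V) [DecidableRel G.Adj]
    (A : Finset V) : Finset V :=
  oddNbhd G A ∆ A

/-- Closed adjacency indicator over `ZMod 2`. -/
def cInd [DecidableEq V] (G : SimpleGraph V) [DecidableRel G.Adj] (u w : V) : ZMod 2 :=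
  if w = u ∨ G.Adj u w then 1 else 0

theorem pivot_ind [DecidableEq V] (G : SimpleGraph V) [DecidableRel G.Adj]
    (u v : V) (huv : G.Adj u v) (w x : V) :
    (if (pivot G u v).Adj w x then (1 : ZMod 2) else 0) =
      (if G.Adj w x then 1 else 0) + cInd G u w * cInd G v x + cInd G v w * cInd G u x := by
  have h2 : (1 : ZMod 2) + 1 = 0 := by decide
  have hne : u ≠ v := huv.ne
  have hvu : G.Adj v u := huv.symm
  have huu : ¬ G.Adj u u := G.loopless.irrefl u
  have hvv : ¬ G.Adj v v := G.loopless.irrefl v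
  simp only [cInd, pivot, localComp, Xor']
  by_cases hwx : w = x
  · subst hwx
    by_cases h1 : w = u ∨ G.Adj u w <;> by_cases h3 : w = v ∨ G.Adj v w <;> simp [h1, h3, h2]
  have hxw : x ≠ w := fun h => hwx h.symm
  have e1 := G.adj_comm w u
  have e2 := G.adj_comm w v
  have e3 := G.adj_comm x u
  have e4 := G.adj_comm x v
  have hww : ¬ G.Adj w w := G.loopless.irrefl w
  have hxx : ¬ G.Adj x x := G.loopless.irrefl x
  grind

theorem mem_oddNbhd_iff [Fintype V] [DecidableEq V] (G : SimpleGraph V) [DecidableRel G.Adj]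
    (A : Finset V) (w : V) :
    w ∈ oddNbhd G A ↔ (∑ x ∈ A, if G.Adj w x then (1 : ZMod 2) else 0) = 1 := by
  rw [Finset.sum_boole, ZMod.natCast_eq_one_iff_odd]
  simp [oddNbhd]

theorem mem_cOddNbhd_iff [Fintype V] [DecidableEq V] (G : SimpleGraph V) [DecidableRel G.Adj]
    (A : Finset V) (w : V) :
    w ∈ cOddNbhd G A ↔ (∑ x ∈ A, cInd G w x) = 1 := by
  have key : (∑ x ∈ A, cInd G w x) =
      (∑ x ∈ A, if G.Adj w x then (1 : ZMod 2) else 0) + if w ∈ A then 1 else 0 := by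
    rw [← Finset.sum_ite_eq' A w (fun _ => (1 : ZMod 2)), ← Finset.sum_add_distrib]
    refine Finset.sum_congr rfl fun x _ => ?_
    by_cases h : x = w
    · subst h; simp [cInd]
    · simp [cInd, h]
  rw [key, cOddNbhd, Finset.mem_symmDiff, mem_oddNbhd_iff]
  generalize (∑ x ∈ A, if G.Adj w x then (1 : ZMod 2) else 0) = s
  by_cases h : w ∈ A <;> simp only [h, if_true, if_false] <;> revert s <;> decide

theorem mem_clNbhd_iff [Fintype V] [DecidableEq V] (G : SimpleGraph V) [DecidableRel G.Adj]
    (u w : V) : w ∈ clNbhd G u ↔ cInd G u w = 1 := by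
  simp [clNbhd, nbhd, cInd, or_iff_not_imp_left]

theorem oddNbhd_pivot [Fintype V] [DecidableEq V] (G : SimpleGraph V) [DecidableRel G.Adj]
    (A : Finset V) (u : V) (v : V) (hv : v ∈ nbhd G u) :
    (u ∉ cOddNbhd G A → v ∉ cOddNbhd G A →
      oddNbhd (pivot G u v) A = oddNbhd G A) ∧
    (u ∈ cOddNbhd G A → v ∉ cOddNbhd G A →
      oddNbhd (pivot G u v) A = oddNbhd G A ∆ clNbhd G v) ∧
    (u ∉ cOddNbhd G A → v ∈ cOddNbhd G A →
      oddNbhd (pivot G u v) A = oddNbhd G A ∆ clNbhd G u) ∧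
    (u ∈ cOddNbhd G A → v ∈ cOddNbhd G A →
      oddNbhd (pivot G u v) A = oddNbhd G A ∆ clNbhd G u ∆ clNbhd G v) := by
  have huv : G.Adj u v := by simpa [nbhd] using hv
  have key : ∀ w, w ∈ oddNbhd (pivot G u v) A ↔
      (∑ x ∈ A, if G.Adj w x then (1 : ZMod 2) else 0) + cInd G u w * (∑ x ∈ A, cInd G v x)
        + cInd G v w * (∑ x ∈ A, cInd G u x) = 1 := by
    intro w
    rw [mem_oddNbhd_iff, Finset.mul_sum, Finset.mul_sum, ← Finset.sum_add_distrib,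
      ← Finset.sum_add_distrib, Finset.sum_congr rfl fun x _ => pivot_ind G u v huv w x]
  simp only [Finset.ext_iff, Finset.mem_symmDiff, key, mem_cOddNbhd_iff, mem_clNbhd_iff,
    mem_oddNbhd_iff]
  generalize (∑ x ∈ A, cInd G v x) = p
  generalize (∑ x ∈ A, cInd G u x) = q
  refine ⟨fun h1 h2 w => ?_, fun h1 h2 w => ?_, fun h1 h2 w => ?_, fun h1 h2 w => ?_⟩ <;>
  · generalize (∑ x ∈ A, if G.Adj w x then (1 : ZMod 2) else 0) = s
    generalize cInd G u w = a
    generalize cInd G v w = b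
    clear key
    revert p q s a b
    decide
end

section
/- Let (G,I,O) be an open graph with focused gFlow (g,≺), and let u, v be adjacent vertices of G with u,v ∉ I ∪ O. Define g'(w) := g(w) ∖ {u,v} for every w ∈ V ∖ (O ∪ {u,v}). Then (g',≺) (with ≺ restricted to V ∖ {u,v}) is a focused gFlow for the open graph ((G∧uv) ∖ {u,v}, I, O). -/
open Finset symmDiff

variable {V : Type*}

theorem pivot_adj_aux (G : SimpleGraph V) (u v x y : V) (huv : G.Adj u v)
    (hxu : x ≠ u) (hxv : x ≠ v) (hyu : y ≠ u) (hyv : y ≠ v) :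
    (pivot G u v).Adj x y ↔
      Xor (G.Adj x y) (Xor (G.Adj u x ∧ G.Adj v y) (G.Adj v x ∧ G.Adj u y)) := by
  have h1 := huv.symm
  have h2 := huv.ne
  have h3 := G.loopless.irrefl x
  have h4 := G.loopless.irrefl u
  have h5 := G.loopless.irrefl v
  by_cases hxy : x = y
  · subst hxy
    simp only [pivot, localComp, Xor', Xor]
    tauto
  · simp only [pivot, localComp, Xor', Xor, ne_eq, hxy, Ne.symm hxu, Ne.symm hxv, Ne.symm hyu,
      Ne.symm hyv, h2, h2.symm, huv, h1, h4, h5, not_false_eq_true, true_and, and_true]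
    by_cases a : G.Adj x y <;> by_cases b : G.Adj u x <;> by_cases c : G.Adj u y <;>
      by_cases d : G.Adj v x <;> by_cases e : G.Adj v y <;> simp [a, b, c, d, e]

theorem odd_card_filter_iff (A : Finset V) (p : V → Prop) [DecidablePred p] :
    Odd (A.filter p).card ↔ (∑ y ∈ A, if p y then (1 : ZMod 2) else 0) = 1 := by
  rw [Finset.sum_boole, ZMod.natCast_eq_one_iff_odd]

theorem not_odd_card_filter_iff (A : Finset V) (p : V → Prop) [DecidablePred p] :
    ¬ Odd (A.filter p).card ↔ (∑ y ∈ A, if p y then (1 : ZMod 2) else 0) = 0 := by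
  rw [Finset.sum_boole, ZMod.natCast_eq_zero_iff_even, Nat.not_odd_iff_even]

theorem odd_pivot_aux [Fintype V] [DecidableEq V]
    (G : SimpleGraph V) [DecidableRel G.Adj] (u v x : V) (huv : G.Adj u v)
    (hxu : x ≠ u) (hxv : x ≠ v) (A : Finset V)
    (hu : ¬ Odd (A.filter (G.Adj u)).card) (hv : ¬ Odd (A.filter (G.Adj v)).card) :
    Odd ((A \ {u, v}).filter ((pivot G u v).Adj x)).card ↔ Odd (A.filter (G.Adj x)).card := by
  rw [not_odd_card_filter_iff] at hu hv
  rw [odd_card_filter_iff, odd_card_filter_iff]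
  have key : (∑ y ∈ A \ {u, v}, if (pivot G u v).Adj x y then (1 : ZMod 2) else 0) =
      ∑ y ∈ A, ((if G.Adj x y then (1 : ZMod 2) else 0)
        + (if G.Adj u x then 1 else 0) * (if G.Adj v y then 1 else 0)
        + (if G.Adj v x then 1 else 0) * (if G.Adj u y then 1 else 0)) := by
    have h11 : (1 : ZMod 2) + 1 = 0 := by decide
    rw [← Finset.sum_subset (Finset.sdiff_subset (s := A) (t := {u, v}))]
    · refine Finset.sum_congr rfl fun y hy => ?_
      simp only [mem_sdiff, mem_insert, mem_singleton, not_or] at hy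
      simp only [pivot_adj_aux G u v x y huv hxu hxv hy.2.1 hy.2.2, Xor', Xor]
      by_cases a : G.Adj x y <;> by_cases b : G.Adj u x <;> by_cases c : G.Adj u y <;>
        by_cases d : G.Adj v x <;> by_cases e : G.Adj v y <;> simp [a, b, c, d, e, h11]
    · intro y hy hy'
      have : y = u ∨ y = v := by
        simp only [mem_sdiff, mem_insert, mem_singleton] at hy'
        tauto
      rcases this with rfl | rfl
      · by_cases b : G.Adj x y <;> simp [b, G.adj_comm y x, huv.symm, h11]
      · by_cases b : G.Adj x y <;> simp [b, G.adj_comm y x, huv, h11]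
  rw [key, Finset.sum_add_distrib, Finset.sum_add_distrib, ← Finset.mul_sum, ← Finset.mul_sum,
    hu, hv]
  simp

theorem isFocusedGFlow_pivot_delete [Fintype V] [DecidableEq V]
    (G : SimpleGraph V) [DecidableRel G.Adj] (I O : Finset V)
    (g : V → Finset V) (r : V → V → Prop) (hg : IsFocusedGFlow G I O g r)
    (u v : V) (huv : G.Adj u v) (hu : u ∉ I ∪ O) (hv : v ∉ I ∪ O) :
    IsFocusedGFlow
      ((pivot G u v).comap (Subtype.val : {x : V // x ≠ u ∧ x ≠ v} → V))
      (I.subtype (fun x => x ≠ u ∧ x ≠ v)) (O.subtype (fun x => x ≠ u ∧ x ≠ v))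
      (fun w => ((g w.val) \ {u, v}).subtype (fun x => x ≠ u ∧ x ≠ v))
      (fun a b => r a.val b.val) := by
  obtain ⟨h1, h2, h3⟩ := hg
  refine ⟨fun a => h1 _, fun a b c => h2 _ _ _, ?_⟩
  rintro ⟨w, hwu, hwv⟩ hw
  simp only [mem_subtype] at hw
  obtain ⟨hI, hodd, hr⟩ := h3 w hw
  simp only [mem_union, not_or] at hu hv
  have hmem : ∀ x, x ∉ O → (Odd ((g w).filter (G.Adj x)).card ↔ x = w) := by
    intro x hx
    have := Finset.ext_iff.1 hodd x
    simpa [oddNbhd, hx] using this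
  refine ⟨?_, ?_, ?_⟩
  · ext ⟨x, hx⟩
    have := Finset.ext_iff.1 hI x
    simp only [mem_inter, mem_subtype, mem_sdiff, notMem_empty, iff_false] at this ⊢
    tauto
  · ext ⟨x, hxu, hxv⟩
    have hc : (((g w \ {u, v}).subtype (fun x => x ≠ u ∧ x ≠ v)).filter
        (((pivot G u v).comap (Subtype.val : {x : V // x ≠ u ∧ x ≠ v} → V)).Adj
          ⟨x, hxu, hxv⟩)).card = ((g w \ {u, v}).filter ((pivot G u v).Adj x)).card := by
      rw [← Finset.card_map (Function.Embedding.subtype _)]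
      congr 1
      ext y
      simp only [mem_map, mem_filter, mem_subtype, mem_sdiff, mem_insert, mem_singleton,
        SimpleGraph.comap_adj, Function.Embedding.subtype_apply, Subtype.exists]
      constructor
      · rintro ⟨a, ha, h, rfl⟩
        exact h
      · intro h
        exact ⟨y, not_or.1 h.1.2, h, rfl⟩
    simp only [oddNbhd, mem_sdiff, mem_filter, mem_univ, true_and, mem_subtype, mem_singleton,
      Subtype.mk.injEq]
    rw [hc, odd_pivot_aux G u v x huv hxu hxv (g w)
      (by rw [hmem u hu.2]; exact hwu.symm) (by rw [hmem v hv.2]; exact hwv.symm)]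
    constructor
    · rintro ⟨a, b⟩
      exact (hmem x b).1 a
    · rintro rfl
      exact ⟨(hmem x hw).2 rfl, hw⟩
  · rintro ⟨x, hx⟩ hm
    simp only [mem_subtype, mem_sdiff] at hm
    exact hr x hm.1
end

section
/- If an open graph (G,I,O) admits a causal flow, then it admits a focused gFlow. -/
open Finset symmDiff

variable {V : Type*}

/-- `(f, r)` is a causal flow on the open graph `(G, I, O)`: `r` is a strict partial
order and for every non-output `v`: `f v` is a non-input neighbour of `v`, `v ≺ f v`,
and every vertex `w ≠ v` adjacent to `f v` satisfies `v ≺ w`. -/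
def IsCausalFlow [Fintype V] [DecidableEq V] (G : SimpleGraph V) [DecidableRel G.Adj]
    (I O : Finset V) (f : V → V) (r : V → V → Prop) : Prop :=
  (∀ a, ¬ r a a) ∧ (∀ a b c, r a b → r b c → r a c) ∧
    ∀ v ∉ O, f v ∉ I ∧ G.Adj v (f v) ∧ r v (f v) ∧
      ∀ w, w ≠ v → G.Adj (f v) w → r v w

/-- `(g, r)` is a (generalised) gFlow on the open graph `(G, I, O)`. -/
def IsGFlow [Fintype V] [DecidableEq V] (G : SimpleGraph V) [DecidableRel G.Adj]
    (I O : Finset V) (g : V → Finset V) (r : V → V → Prop) : Prop :=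
  (∀ a, ¬ r a a) ∧ (∀ a b c, r a b → r b c → r a c) ∧
    ∀ u ∉ O, g u ∩ I = ∅ ∧ u ∈ oddNbhd G (g u) ∧ (∀ v ∈ g u, r u v) ∧
      ∀ v ∈ oddNbhd G (g u), v ≠ u → r u v

/-- Linear-algebraic form: for each non-output there is a focused correction vector. -/
theorem exists_focused_vector [Fintype V] [DecidableEq V]
    (G : SimpleGraph V) [DecidableRel G.Adj] (I O : Finset V) (f : V → V) (r : V → V → Prop)
    (h : IsCausalFlow G I O f r) (u : V) : u ∉ O →
    ∃ x : V → ZMod 2, (∀ v, x v ≠ 0 → v ∉ I ∧ r u v) ∧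
      ∀ w ∉ O, ∑ v, (if G.Adj w v then x v else 0) = if w = u then 1 else 0 := by
  obtain ⟨hirr, htr, hf⟩ := h
  have hwf : WellFounded (fun a b => r b a) := by
    haveI : Std.Irrefl (fun a b => r b a) := ⟨hirr⟩
    haveI : IsTrans V (fun a b => r b a) := ⟨fun a b c h1 h2 => htr _ _ _ h2 h1⟩
    exact Finite.wellFounded_of_trans_of_irrefl _
  induction u using hwf.induction with
  | _ u ih =>
  intro hu
  obtain ⟨hI, hadj, hr, hn⟩ := hf u hu
  have ih' : ∀ y, ∃ x : V → ZMod 2, r u y → y ∉ O → ((∀ v, x v ≠ 0 → v ∉ I ∧ r y v) ∧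
      ∀ w ∉ O, ∑ v, (if G.Adj w v then x v else 0) = if w = y then 1 else 0) := by
    intro y
    by_cases h1 : r u y
    · by_cases h2 : y ∉ O
      · obtain ⟨x, hx⟩ := ih y h1 h2
        exact ⟨x, fun _ _ => hx⟩
      · exact ⟨0, fun _ h => absurd h h2⟩
    · exact ⟨0, fun h => absurd h h1⟩
  choose X hX using ih'
  let S : Finset V := Finset.univ.filter fun y => G.Adj (f u) y ∧ y ≠ u ∧ y ∉ O
  have hS : ∀ y ∈ S, r u y ∧ y ∉ O := by
    intro y hy
    simp only [S, Finset.mem_filter, Finset.mem_univ, true_and] at hy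
    exact ⟨hn y hy.2.1 hy.1, hy.2.2⟩
  refine ⟨fun v => (if v = f u then 1 else 0) + ∑ y ∈ S, X y v, ?_, ?_⟩
  · intro v hv
    by_cases hvf : v = f u
    · subst hvf
      exact ⟨hI, hr⟩
    · simp only [hvf, if_false, zero_add] at hv
      obtain ⟨y, hy, hne⟩ := Finset.exists_ne_zero_of_sum_ne_zero hv
      obtain ⟨h1, h2⟩ := hS y hy
      have := (hX y h1 h2).1 v hne
      exact ⟨this.1, htr _ _ _ h1 this.2⟩
  · intro w hw
    have e : ∀ v, (if G.Adj w v then ((if v = f u then 1 else 0) + ∑ y ∈ S, X y v : ZMod 2) else 0)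
        = (if v = f u then (if G.Adj w (f u) then 1 else 0) else 0)
          + ∑ y ∈ S, (if G.Adj w v then X y v else 0) := by
      intro v
      by_cases hvf : v = f u
      · subst hvf
        by_cases ha : G.Adj w (f u) <;> simp [ha]
      · by_cases ha : G.Adj w v <;> simp [ha, hvf]
    rw [Finset.sum_congr rfl fun v _ => e v, Finset.sum_add_distrib, Finset.sum_comm,
      Finset.sum_congr rfl fun y hy => (hX y (hS y hy).1 (hS y hy).2).2 w hw,
      Finset.sum_ite_eq', Finset.sum_ite_eq]
    have h2 : (1 + 1 : ZMod 2) = 0 := by decide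
    by_cases hwu : w = u
    · subst hwu
      simp [S, hadj]
    · by_cases ha : G.Adj w (f u)
      · simp [S, hwu, hw, ha, ha.symm, h2]
      · have ha' : ¬ G.Adj (f u) w := fun h => ha h.symm
        simp [S, hwu, ha, ha']

theorem hasFocusedGFlow_of_causalFlow [Fintype V] [DecidableEq V]
    (G : SimpleGraph V) [DecidableRel G.Adj] (I O : Finset V)
    (h : ∃ f r, IsCausalFlow G I O f r) :
    HasFocusedGFlow G I O := by
  obtain ⟨f, r, hf⟩ := h
  have H : ∀ u, ∃ x : V → ZMod 2, u ∉ O → ((∀ v, x v ≠ 0 → v ∉ I ∧ r u v) ∧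
      ∀ w ∉ O, ∑ v, (if G.Adj w v then x v else 0) = if w = u then 1 else 0) := by
    intro u
    by_cases hu : u ∉ O
    · obtain ⟨x, hx⟩ := exists_focused_vector G I O f r hf u hu
      exact ⟨x, fun _ => hx⟩
    · exact ⟨0, fun h => absurd h hu⟩
  choose X hX using H
  refine ⟨fun u => Finset.univ.filter fun v => X u v ≠ 0, r, hf.1, hf.2.1, ?_⟩
  intro u hu
  obtain ⟨h1, h2⟩ := hX u hu
  refine ⟨?_, ?_, ?_⟩
  · ext v
    simp only [Finset.mem_inter, Finset.mem_filter, Finset.mem_univ, true_and,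
      Finset.notMem_empty, iff_false, not_and]
    exact fun hv => (h1 v hv).1
  · ext w
    simp only [oddNbhd, Finset.mem_sdiff, Finset.mem_filter, Finset.mem_univ, true_and,
      Finset.mem_singleton, Finset.filter_filter]
    have key : w ∉ O → (Odd (Finset.univ.filter fun v => X u v ≠ 0 ∧ G.Adj w v).card ↔ w = u) := by
      intro hw
      rw [← ZMod.natCast_eq_one_iff_odd, Finset.card_filter, Nat.cast_sum]
      have hz : ∀ a : ZMod 2, a ≠ 0 → a = 1 := by decide
      have e : ∀ v, (((if X u v ≠ 0 ∧ G.Adj w v then 1 else 0 : ℕ)) : ZMod 2)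
          = if G.Adj w v then X u v else 0 := by
        intro v
        by_cases ha : G.Adj w v
        · by_cases hx : X u v = 0
          · simp [hx]
          · simp [ha, hz _ hx]
        · simp [ha]
      rw [Finset.sum_congr rfl fun v _ => e v, h2 w hw]
      by_cases hwu : w = u <;> simp [hwu]
    constructor
    · rintro ⟨ho, hw⟩
      exact (key hw).1 ho
    · rintro rfl
      exact ⟨(key hu).2 rfl, hu⟩
  · intro v hv
    exact (h1 v (Finset.mem_filter.1 hv).2).2
end

section
/- Let (G,I,O) be an open graph with focused gFlow (g,≺), let u ∉ I ∪ O, and let w ∈ V ∖ (O ∪ {u}). Then Odd_{G⋆u}(g(w)) ∩ (V ∖ (O ∪ {u})) = {w} Δ R_w, where R_w := N_G(u) ∩ g(w) ∩ (V ∖ O). -/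
open Finset symmDiff

variable {V : Type*}

theorem odd_card_symmDiff_aux {W : Type*} [DecidableEq W] (s t : Finset W) :
    Odd (s ∆ t).card ↔ ¬ (Odd s.card ↔ Odd t.card) := by
  have h1 : (s ∆ t).card = (s \ t).card + (t \ s).card := by
    rw [symmDiff_def]
    exact Finset.card_union_of_disjoint disjoint_sdiff_sdiff
  have h2 := Finset.card_sdiff_add_card_inter s t
  have h3 := Finset.card_sdiff_add_card_inter t s
  rw [Finset.inter_comm] at h3
  simp only [Nat.odd_iff]
  omega

theorem localComp_adj_aux (G : SimpleGraph V) (u v x : V) : (localComp G u).Adj v x ↔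
    v ≠ x ∧ ((G.Adj v x ∧ ¬ (G.Adj u v ∧ G.Adj u x)) ∨ ((G.Adj u v ∧ G.Adj u x) ∧ ¬ G.Adj v x)) :=
  Iff.rfl

theorem oddNbhd_localComp_correction [Fintype V] [DecidableEq V]
    (G : SimpleGraph V) [DecidableRel G.Adj] (I O : Finset V)
    (g : V → Finset V) (r : V → V → Prop) (hg : IsFocusedGFlow G I O g r)
    (u : V) (hu : u ∉ I ∪ O) (w : V) (hw : w ∉ O ∪ {u}) :
    oddNbhd (localComp G u) (g w) \ (O ∪ {u}) =
      ({w} : Finset V) ∆ ((nbhd G u ∩ g w) \ O) := by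
  obtain ⟨_, _, h⟩ := hg
  simp only [mem_union, mem_singleton, not_or] at hu hw
  obtain ⟨_, hodd, _⟩ := h w hw.1
  have key : ∀ v, v ∉ O → (Odd ((g w).filter (G.Adj v)).card ↔ v = w) := by
    intro v hv
    have := Finset.ext_iff.1 hodd v
    simpa [oddNbhd, hv] using this
  have hue : ¬ Odd ((g w).filter (G.Adj u)).card := by
    rw [key u hu.2]; exact fun h => hw.2 h.symm
  ext v
  by_cases hvO : v ∈ O
  · have : v ≠ w := fun h => hw.1 (h ▸ hvO)
    simp [Finset.mem_symmDiff, hvO, this]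
  by_cases hvu : v = u
  · subst hvu
    simp [Finset.mem_symmDiff, nbhd, Ne.symm hw.2]
  have kv := key v hvO
  simp only [oddNbhd, nbhd, mem_sdiff, mem_filter, mem_univ, true_and, mem_union, mem_singleton,
    hvO, hvu, or_self, not_false_eq_true, and_true, Finset.mem_symmDiff, mem_inter]
  by_cases ha : G.Adj u v
  · have e : (g w).filter ((localComp G u).Adj v) =
        ((g w).filter (G.Adj v)) ∆ (((g w).filter (G.Adj u)).erase v) := by
      ext x
      have : ¬ G.Adj v v := G.loopless.irrefl v
      simp only [mem_filter, localComp_adj_aux, Finset.mem_symmDiff, mem_erase]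
      by_cases hx : v = x
      · subst hx; simp [this]
      · have := Ne.symm hx
        tauto
    rw [e, odd_card_symmDiff_aux, kv]
    by_cases hm : v ∈ g w
    · have hc := Finset.card_erase_add_one (s := (g w).filter (G.Adj u)) (a := v) (by simp [hm, ha])
      have : Odd (((g w).filter (G.Adj u)).erase v).card := by
        rw [Nat.odd_iff] at *; omega
      simp only [this, ha, hm]
      tauto
    · rw [Finset.erase_eq_of_notMem (by simp [hm])]
      simp [hue, ha, hm]
  · have e : (g w).filter ((localComp G u).Adj v) = (g w).filter (G.Adj v) := by
      ext x
      simp only [mem_filter, localComp_adj_aux, ha, false_and, not_false_eq_true, and_true, or_false]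
      exact ⟨fun h => ⟨h.1, h.2.2⟩, fun h => ⟨h.1, h.2.ne, h.2⟩⟩
    rw [e, kv]
    simp [ha]
end

section
/- Let (G,I,O) be an open graph with focused gFlow (g,≺), and let u ∉ I ∪ O. Then Odd_{G⋆u}({u} Δ g(u)) ∩ (V ∖ (O ∪ {u})) = R_u, where R_u := N_G(u) ∩ g(u) ∩ (V ∖ O). -/
open Finset symmDiff

variable {V : Type*}

theorem odd_card_filter_iff_zmod {α : Type*} (A : Finset α) (p : α → Prop) [DecidablePred p] :
    Odd (A.filter p).card ↔ (∑ x ∈ A, if p x then (1 : ZMod 2) else 0) = 1 := by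
  rw [← ZMod.natCast_eq_one_iff_odd, Finset.sum_boole]

theorem oddNbhd_localComp_correction_self [Fintype V] [DecidableEq V]
    (G : SimpleGraph V) [DecidableRel G.Adj] (I O : Finset V)
    (g : V → Finset V) (r : V → V → Prop) (hg : IsFocusedGFlow G I O g r)
    (u : V) (hu : u ∉ I ∪ O) :
    oddNbhd (localComp G u) (({u} : Finset V) ∆ g u) \ (O ∪ {u}) =
      (nbhd G u ∩ g u) \ O := by
  obtain ⟨hirr, -, hfl⟩ := hg
  have huO : u ∉ O := fun h => hu (Finset.mem_union_right _ h)
  obtain ⟨-, hodd, hlt⟩ := hfl u huO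
  have hug : u ∉ g u := fun h => hirr u (hlt u h)
  have hins : ({u} : Finset V) ∆ g u = insert u (g u) := by
    ext x
    simp only [Finset.mem_symmDiff, Finset.mem_singleton, Finset.mem_insert]
    by_cases hx : x = u
    · subst hx; simp [hug]
    · simp [hx]
  have hmem : ∀ w, w ∉ O →
      ((∑ x ∈ g u, if G.Adj w x then (1 : ZMod 2) else 0) = 1 ↔ w = u) := by
    intro w hw
    rw [← odd_card_filter_iff_zmod]
    have h := Finset.ext_iff.mp hodd w
    simpa [oddNbhd, hw] using h
  have hu1 := (hmem u huO).2 rfl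
  ext w
  simp only [oddNbhd, nbhd, Finset.mem_sdiff, Finset.mem_filter, Finset.mem_univ, true_and,
    Finset.mem_union, Finset.mem_singleton, Finset.mem_inter, not_or]
  by_cases hwO : w ∈ O
  · simp [hwO]
  by_cases hwu : w = u
  · subst hwu; simp [hug]
  simp only [hwO, hwu, not_false_eq_true, and_true]
  have hw0 : (∑ x ∈ g u, if G.Adj w x then (1 : ZMod 2) else 0) = 0 := by
    have h := (hmem w hwO).not.2 hwu
    generalize (∑ x ∈ g u, if G.Adj w x then (1 : ZMod 2) else 0) = s at h
    revert s; decide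
  rw [odd_card_filter_iff_zmod, hins, Finset.sum_insert hug]
  have hau : (localComp G u).Adj w u ↔ G.Adj u w := by
    simp [localComp, hwu, Xor', Xor, G.adj_comm w u]
  have hpt : ∀ x, (if (localComp G u).Adj w x then (1 : ZMod 2) else 0) =
      (if G.Adj w x then 1 else 0) + (if G.Adj u w then
        ((if G.Adj u x then 1 else 0) + (if w = x then 1 else 0)) else 0) := by
    intro x
    have h2 : (1 : ZMod 2) + 1 = 0 := by decide
    by_cases hx : w = x
    · subst hx
      by_cases h : G.Adj u w <;> simp [h, h2]
    · by_cases h : G.Adj u w <;> by_cases hux : G.Adj u x <;> by_cases hwx : G.Adj w x <;>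
        simp [localComp, hx, h, hux, hwx, Xor', Xor, h2]
  rw [Finset.sum_congr rfl fun x _ => hpt x, Finset.sum_add_distrib, hw0]
  by_cases h : G.Adj u w
  · simp only [hau, h, if_true, Finset.sum_add_distrib, hu1, Finset.sum_ite_eq, true_and]
    by_cases hwg : w ∈ g u <;> simp only [hwg, if_true, if_false] <;> decide
  · simp [hau, h]
end
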